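/- arXiv:math/0207008 — 2 statements merged into one kernel-verified Lean document; each statement's English description precedes it below -/
import Mathlib

section
/- Let 𝔤 = 𝔰𝔩₂(ℂ) with e, f, h and Ω = (1/2)h⊗h + e⊗f + f⊗e (the Casimir element of 𝔤⊗𝔤 for the trace form). Consider the basic trigonometric classical dynamical r-matrix r(λ) = Ω/2 + Σ_{α>0} (1/2)coth((λ,α)/2)(e_α⊗e_{−α} − e_{−α}⊗e_α), which for 𝔰𝔩₂ is r(λ) = Ω/2 + (1/2)coth(λ/2)(e⊗f − f⊗e). Then r satisfies the classical dynamical Yang–Baxter equation, and r(λ) + r²¹(λ) = Ω, i.e. r has coupling constant 1. -/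
/-!
STATEMENT 9: the basic trigonometric classical dynamical r-matrix for 𝔰𝔩₂,
`r(λ) = Ω/2 + (1/2)·coth(λ/2)·(e⊗f - f⊗e)`, `Ω = (1/2)h⊗h + e⊗f + f⊗e`,
satisfies CDYBE and has coupling constant 1: `r(λ) + r²¹(λ) = Ω`.

As in the rational case, all terms lie in 𝔤⊗𝔤(⊗𝔤) and are represented
faithfully by 4×4 (8×8) matrices via the vector representation; the dynamical
derivative term is `h^{(k)} d/dλ` in the coordinate λ = (λ,α).
-/

namespace Stmt9

abbrev M2 := Matrix (Fin 2) (Fin 2) ℂ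
abbrev M4 := Matrix (Fin 2 × Fin 2) (Fin 2 × Fin 2) ℂ
abbrev M8 := Matrix (Fin 2 × Fin 2 × Fin 2) (Fin 2 × Fin 2 × Fin 2) ℂ

def e : M2 := !![0, 1; 0, 0]
def f : M2 := !![0, 0; 1, 0]
def h : M2 := !![1, 0; 0, -1]

def k2 (A B : M2) : M4 := fun p q => A p.1 q.1 * B p.2 q.2
def k3 (A B C : M2) : M8 := fun p q => A p.1 q.1 * B p.2.1 q.2.1 * C p.2.2 q.2.2

noncomputable def coth (z : ℂ) : ℂ := Complex.cosh z / Complex.sinh z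

/-- The Casimir element Ω of 𝔤⊗𝔤 for the trace form. -/
noncomputable def Ω : M4 := (1/2 : ℂ) • k2 h h + k2 e f + k2 f e

/-- `r(λ) = Ω/2 + (1/2)coth(λ/2)(e⊗f - f⊗e)` on V ⊗ V. -/
noncomputable def r (t : ℂ) : M4 :=
  (1/2 : ℂ) • Ω + ((1/2 : ℂ) * coth (t / 2)) • (k2 e f - k2 f e)

noncomputable def r12 (t : ℂ) : M8 :=
  (1/4 : ℂ) • k3 h h 1 + ((1/2 : ℂ) + (1/2 : ℂ) * coth (t / 2)) • k3 e f 1 +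
    ((1/2 : ℂ) - (1/2 : ℂ) * coth (t / 2)) • k3 f e 1
noncomputable def r13 (t : ℂ) : M8 :=
  (1/4 : ℂ) • k3 h 1 h + ((1/2 : ℂ) + (1/2 : ℂ) * coth (t / 2)) • k3 e 1 f +
    ((1/2 : ℂ) - (1/2 : ℂ) * coth (t / 2)) • k3 f 1 e
noncomputable def r23 (t : ℂ) : M8 :=
  (1/4 : ℂ) • k3 1 h h + ((1/2 : ℂ) + (1/2 : ℂ) * coth (t / 2)) • k3 1 e f +
    ((1/2 : ℂ) - (1/2 : ℂ) * coth (t / 2)) • k3 1 f e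

noncomputable def D (g : ℂ → M8) (t : ℂ) : M8 := fun p q => deriv (fun s => g s p q) t

/-- `r²¹` is `r` with the tensor factors swapped. -/
noncomputable def r21 (t : ℂ) : M4 := fun p q => r t (p.2, p.1) (q.2, q.1)

theorem hasDerivAt_half_coth_half {t : ℂ} (ht : Complex.sinh (t / 2) ≠ 0) :
    HasDerivAt (fun s => (1/2 : ℂ) * coth (s / 2)) ((1 - coth (t / 2) ^ 2) / 4) t := by
  have hd : HasDerivAt (fun s : ℂ => s / 2) (1 / 2) t := (hasDerivAt_id t).div_const 2
  refine ((hd.ccosh.fun_div hd.csinh ht).const_mul (1/2 : ℂ)).congr_deriv ?_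
  unfold coth
  field_simp
  ring

/-- The entrywise derivative of a matrix family depending on `coth (t / 2)` the way
`r12`, `r13` and `r23` do. -/
theorem D_coth_family (A B C : M8) {t : ℂ} (ht : Complex.sinh (t / 2) ≠ 0) :
    D (fun s => (1/4 : ℂ) • A + ((1/2 : ℂ) + (1/2 : ℂ) * coth (s / 2)) • B +
      ((1/2 : ℂ) - (1/2 : ℂ) * coth (s / 2)) • C) t =
      ((1 - coth (t / 2) ^ 2) / 4) • (B - C) := by
  ext p q
  have hc := hasDerivAt_half_coth_half ht
  have hB := (hc.const_add (1/2 : ℂ)).mul_const (B p q)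
  have hC := (hc.const_sub (1/2 : ℂ)).mul_const (C p q)
  refine (((hB.const_add ((1/4 : ℂ) * A p q)).fun_add hC).deriv).trans ?_
  simp only [Matrix.smul_apply, Matrix.sub_apply, smul_eq_mul]
  ring

theorem k3_mul (A B C A' B' C' : M2) :
    k3 A B C * k3 A' B' C' = k3 (A * A') (B * B') (C * C') := by
  ext p q
  simp only [k3, Matrix.mul_apply, Fintype.sum_prod_type, Fin.sum_univ_two]
  ring

theorem k3_add_left (A A' B C : M2) :
    k3 (A + A') B C = k3 A B C + k3 A' B C := by
  ext p q
  simp only [k3, Matrix.add_apply]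
  ring

theorem k3_smul_left (a : ℂ) (A B C : M2) :
    k3 (a • A) B C = a • k3 A B C := by
  ext p q
  simp only [k3, Matrix.smul_apply, smul_eq_mul]
  ring

theorem k3_zero_left (B C : M2) : k3 0 B C = 0 := by
  ext p q
  simp [k3]

theorem k3_add_middle (A B B' C : M2) :
    k3 A (B + B') C = k3 A B C + k3 A B' C := by
  ext p q
  simp only [k3, Matrix.add_apply]
  ring

theorem k3_smul_middle (a : ℂ) (A B C : M2) :
    k3 A (a • B) C = a • k3 A B C := by
  ext p q
  simp only [k3, Matrix.smul_apply, smul_eq_mul]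
  ring

theorem k3_zero_middle (A C : M2) : k3 A 0 C = 0 := by
  ext p q
  simp [k3]

theorem k3_add_right (A B C C' : M2) :
    k3 A B (C + C') = k3 A B C + k3 A B C' := by
  ext p q
  simp only [k3, Matrix.add_apply]
  ring

theorem k3_smul_right (a : ℂ) (A B C : M2) :
    k3 A B (a • C) = a • k3 A B C := by
  ext p q
  simp only [k3, Matrix.smul_apply, smul_eq_mul]
  ring

theorem k3_zero_right (A B : M2) : k3 A B 0 = 0 := by
  ext p q
  simp [k3]

theorem e_mul_e : e * e = 0 := by
  ext i j
  fin_cases i <;> fin_cases j <;> norm_num [e]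

theorem f_mul_f : f * f = 0 := by
  ext i j
  fin_cases i <;> fin_cases j <;> norm_num [f]

theorem h_mul_h : h * h = 1 := by
  ext i j
  fin_cases i <;> fin_cases j <;> norm_num [h]

theorem e_mul_f : e * f = (1/2 : ℂ) • (1 : M2) + (1/2 : ℂ) • h := by
  ext i j
  fin_cases i <;> fin_cases j <;> norm_num [e, f, h]

theorem f_mul_e : f * e = (1/2 : ℂ) • (1 : M2) + (-1/2 : ℂ) • h := by
  ext i j
  fin_cases i <;> fin_cases j <;> norm_num [e, f, h]

theorem h_mul_e : h * e = e := by
  ext i j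
  fin_cases i <;> fin_cases j <;> norm_num [e, h]

theorem e_mul_h : e * h = (-1 : ℂ) • e := by
  ext i j
  fin_cases i <;> fin_cases j <;> norm_num [e, h]

theorem h_mul_f : h * f = (-1 : ℂ) • f := by
  ext i j
  fin_cases i <;> fin_cases j <;> norm_num [f, h]

theorem f_mul_h : f * h = f := by
  ext i j
  fin_cases i <;> fin_cases j <;> norm_num [f, h]

/-- The basic trigonometric solution satisfies CDYBE and has coupling
constant 1. -/
theorem basic_trigonometric_CDYBE_and_coupling (lam : ℂ)
    (hlam : Complex.sinh (lam / 2) ≠ 0) :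
    (k3 h 1 1 * D r23 lam - k3 1 h 1 * D r13 lam + k3 1 1 h * D r12 lam +
        (r12 lam * r13 lam - r13 lam * r12 lam) +
        (r12 lam * r23 lam - r23 lam * r12 lam) +
        (r13 lam * r23 lam - r23 lam * r13 lam) = 0) ∧
      r lam + r21 lam = Ω := by
  constructor
  · have h12 : D r12 lam = _ := D_coth_family (k3 h h 1) (k3 e f 1) (k3 f e 1) hlam
    have h13 : D r13 lam = _ := D_coth_family (k3 h 1 h) (k3 e 1 f) (k3 f 1 e) hlam
    have h23 : D r23 lam = _ := D_coth_family (k3 1 h h) (k3 1 e f) (k3 1 f e) hlam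
    rw [h12, h13, h23]
    unfold r12 r13 r23
    generalize coth (lam / 2) = c
    simp only [mul_add, add_mul, mul_sub, smul_mul_assoc, mul_smul_comm, k3_mul, one_mul, mul_one,
      e_mul_e, f_mul_f, h_mul_h, e_mul_f, f_mul_e, h_mul_e, e_mul_h, h_mul_f, f_mul_h,
      k3_add_left, k3_add_middle, k3_add_right, k3_smul_left, k3_smul_middle, k3_smul_right,
      k3_zero_left, k3_zero_middle, k3_zero_right]
    module
  · ext ⟨i, j⟩ ⟨i', j'⟩
    simp only [r21, r, Ω, k2, Matrix.add_apply, Matrix.sub_apply, Matrix.smul_apply, smul_eq_mul]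
    ring

end Stmt9
end

section
/- Let V = ℂⁿ be the vector representation of 𝔰𝔩ₙ(ℂ), with basis vₐ of weights ωₐ. Define R(λ) ∈ End(V⊗V) by R = Σₐ E_{aa}⊗E_{aa} + Σ_{a≠b} α_{ab} E_{aa}⊗E_{bb} + Σ_{a≠b} β_{ab} E_{ab}⊗E_{ba}, with β_{ab} = 1/(λ_b−λ_a−b+a), α_{ab} = 1 for a<b, and α_{ab} = (λ_b−λ_a+a−b−1)(λ_b−λ_a+a−b+1)/(λ_b−λ_a+a−b)² for a>b. Then R(λ) satisfies the quantum dynamical Yang–Baxter equation with step 1 for generic λ. -/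
/-!
STATEMENT 14: the exchange operator for the vector representation of 𝔰𝔩ₙ
(the q → 1 limit of the quantum exchange operator), given by
`β_ab = 1/(λ_b-λ_a-b+a)`, `α_ab = 1` for a < b, and
`α_ab = (λ_b-λ_a+a-b-1)(λ_b-λ_a+a-b+1)/(λ_b-λ_a+a-b)²` for a > b,
satisfies QDYBE with step 1 for generic λ.
-/

namespace Stmt14

abbrev Mat2 (n : ℕ) := Matrix (Fin n × Fin n) (Fin n × Fin n) ℂ
abbrev Mat3 (n : ℕ) := Matrix (Fin n × Fin n × Fin n) (Fin n × Fin n × Fin n) ℂ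

def sh {n : ℕ} (γ : ℂ) (lam : Fin n → ℂ) (c : Fin n) : Fin n → ℂ :=
  fun i => lam i - γ * (if i = c then 1 else 0)

def pl12 {n : ℕ} (A : Fin n → Mat2 n) : Mat3 n := fun p q =>
  if p.2.2 = q.2.2 then A q.2.2 (p.1, p.2.1) (q.1, q.2.1) else 0

def pl13 {n : ℕ} (A : Fin n → Mat2 n) : Mat3 n := fun p q =>
  if p.2.1 = q.2.1 then A q.2.1 (p.1, p.2.2) (q.1, q.2.2) else 0

def pl23 {n : ℕ} (A : Fin n → Mat2 n) : Mat3 n := fun p q =>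
  if p.1 = q.1 then A q.1 (p.2.1, p.2.2) (q.2.1, q.2.2) else 0

def QDYBEat {n : ℕ} (γ : ℂ) (R : (Fin n → ℂ) → Mat2 n) (lam : Fin n → ℂ) : Prop :=
  pl12 (fun c => R (sh γ lam c)) * pl13 (fun _ => R lam) * pl23 (fun a => R (sh γ lam a)) =
    pl23 (fun _ => R lam) * pl13 (fun b => R (sh γ lam b)) * pl12 (fun _ => R lam)

/-- `λ_b - λ_a + a - b` for indices a, b. -/
noncomputable def x {n : ℕ} (lam : Fin n → ℂ) (a b : Fin n) : ℂ :=
  lam b - lam a + (a : ℕ) - (b : ℕ)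

/-- The exchange operator for the vector representation of 𝔰𝔩ₙ. -/
noncomputable def Rexch {n : ℕ} (lam : Fin n → ℂ) : Mat2 n := fun p q =>
  if p = q then
    (if p.1 = p.2 then 1
     else if (p.1 : ℕ) < (p.2 : ℕ) then 1
     else (x lam p.1 p.2 - 1) * (x lam p.1 p.2 + 1) / (x lam p.1 p.2) ^ 2)
  else if p.1 = q.2 ∧ p.2 = q.1 ∧ p.1 ≠ p.2 then 1 / x lam p.1 p.2
  else 0

/-- The coefficient of `E_aa ⊗ E_bb` in the exchange operator. -/
noncomputable def diagCoeff {n : ℕ} (lam : Fin n → ℂ) (a b : Fin n) : ℂ :=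
  if a = b then 1 else if a < b then 1 else (x lam a b - 1) * (x lam a b + 1) / x lam a b ^ 2

/-- The coefficient of `E_ab ⊗ E_ba` in the exchange operator. -/
noncomputable def swapCoeff {n : ℕ} (lam : Fin n → ℂ) (a b : Fin n) : ℂ :=
  if a = b then 0 else 1 / x lam a b

lemma Rexch_apply {n : ℕ} (lam : Fin n → ℂ) (a b c d : Fin n) :
    Rexch lam (a, b) (c, d) = (if a = c ∧ b = d then diagCoeff lam a b else 0) +
      (if b = c ∧ a = d then swapCoeff lam a b else 0) := by
  by_cases hab : a = b
  · subst hab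
    simp [Rexch, diagCoeff, swapCoeff]
  · simp only [Rexch, diagCoeff, swapCoeff, Prod.mk.injEq, Fin.lt_def, hab]
    grind

lemma pl12_mul_apply {n : ℕ} (l : Fin n → Fin n → ℂ) (M : Mat3 n) (a b c : Fin n)
    (q : Fin n × Fin n × Fin n) :
    (pl12 (fun c => Rexch (l c)) * M) (a, b, c) q =
      diagCoeff (l c) a b * M (a, b, c) q + swapCoeff (l c) a b * M (b, a, c) q := by
  simp [Matrix.mul_apply, pl12, Fintype.sum_prod_type, Rexch_apply, add_mul, ite_and,
    Finset.sum_add_distrib]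

lemma pl13_mul_apply {n : ℕ} (l : Fin n → Fin n → ℂ) (M : Mat3 n) (a b c : Fin n)
    (q : Fin n × Fin n × Fin n) :
    (pl13 (fun b => Rexch (l b)) * M) (a, b, c) q =
      diagCoeff (l b) a c * M (a, b, c) q + swapCoeff (l b) a c * M (c, b, a) q := by
  simp [Matrix.mul_apply, pl13, Fintype.sum_prod_type, Rexch_apply, add_mul, ite_and,
    Finset.sum_add_distrib]

lemma pl23_mul_apply {n : ℕ} (l : Fin n → Fin n → ℂ) (M : Mat3 n) (a b c : Fin n)
    (q : Fin n × Fin n × Fin n) :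
    (pl23 (fun a => Rexch (l a)) * M) (a, b, c) q =
      diagCoeff (l a) b c * M (a, b, c) q + swapCoeff (l a) b c * M (a, c, b) q := by
  simp [Matrix.mul_apply, pl23, Fintype.sum_prod_type, Rexch_apply, add_mul, ite_and,
    Finset.sum_add_distrib]

lemma x_sh {n : ℕ} (lam : Fin n → ℂ) (a b c : Fin n) :
    x (sh 1 lam c) a b = x lam a b + (if a = c then 1 else 0) - (if b = c then 1 else 0) := by
  simp only [x, sh]
  ring

lemma x_swap {n : ℕ} (lam : Fin n → ℂ) (a b : Fin n) : x lam b a = -x lam a b := by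
  simp only [x]
  ring

lemma x_add_x {n : ℕ} (lam : Fin n → ℂ) (a b c : Fin n) :
    x lam a b + x lam b c = x lam a c := by
  simp only [x]
  ring

lemma x_add_intCast_ne_zero {n : ℕ} {lam : Fin n → ℂ}
    (hgen : ∀ a b : Fin n, a ≠ b → ∀ k : ℤ, lam a - lam b ≠ (k : ℂ))
    {a b : Fin n} (hab : a ≠ b) (k : ℤ) : x lam a b + k ≠ 0 := by
  intro h
  apply hgen a b hab ((a : ℕ) - (b : ℕ) + k)
  simp only [x] at h
  push_cast
  linear_combination -h

lemma diagCoeff_self {n : ℕ} (lam : Fin n → ℂ) (a : Fin n) : diagCoeff lam a a = 1 := by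
  simp [diagCoeff]

lemma swapCoeff_self {n : ℕ} (lam : Fin n → ℂ) (a : Fin n) : swapCoeff lam a a = 0 := by
  simp [swapCoeff]

lemma diagCoeff_sh_of_ne {n : ℕ} (lam : Fin n → ℂ) {a b c : Fin n} (ha : a ≠ c) (hb : b ≠ c) :
    diagCoeff (sh 1 lam c) a b = diagCoeff lam a b := by
  simp [diagCoeff, x_sh, ha, hb]

lemma swapCoeff_sh_of_ne {n : ℕ} (lam : Fin n → ℂ) {a b c : Fin n} (ha : a ≠ c) (hb : b ≠ c) :
    swapCoeff (sh 1 lam c) a b = swapCoeff lam a b := by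
  simp [swapCoeff, x_sh, ha, hb]

lemma swapCoeff_swap {n : ℕ} (lam : Fin n → ℂ) (a b : Fin n) :
    swapCoeff lam b a = -swapCoeff lam a b := by
  by_cases hab : a = b
  · subst hab
    simp [swapCoeff]
  · simp [swapCoeff, hab, Ne.symm hab, x_swap lam a b, inv_neg]

lemma diagCoeff_mul_swap {n : ℕ} {lam : Fin n → ℂ} {a b : Fin n} (hab : a ≠ b)
    (hx : x lam a b ≠ 0) :
    diagCoeff lam a b * diagCoeff lam b a = 1 - swapCoeff lam a b ^ 2 := by
  rcases lt_or_gt_of_ne hab with h | h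
  all_goals
    simp only [diagCoeff, swapCoeff, hab, hab.symm, h, h.not_gt, x_swap lam a b, if_true, if_false]
    field_simp
    ring

lemma swapCoeff_mul_swapCoeff {n : ℕ} {lam : Fin n → ℂ} {a b c : Fin n} (hab : a ≠ b)
    (hbc : b ≠ c) (hac : a ≠ c) (h1 : x lam a b ≠ 0) (h2 : x lam b c ≠ 0) (h3 : x lam a c ≠ 0) :
    swapCoeff lam a b * swapCoeff lam b c =
      swapCoeff lam a c * (swapCoeff lam a b + swapCoeff lam b c) := by
  simp only [swapCoeff, hab, hbc, hac, if_false]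
  field_simp
  linear_combination -x_add_x lam a b c

/-- The exchange operator satisfies QDYBE with step 1 (generic λ). -/
theorem exchange_operator_satisfies_QDYBE (n : ℕ) (lam : Fin n → ℂ)
    (hgen : ∀ a b : Fin n, a ≠ b → ∀ k : ℤ, lam a - lam b ≠ (k : ℂ)) :
    QDYBEat 1 Rexch lam := by
  ext ⟨a, b, c⟩ q
  rw [← mul_one (pl23 fun a => Rexch (sh 1 lam a)), ← mul_one (pl12 fun _ => Rexch lam)]
  simp only [Matrix.mul_assoc, pl12_mul_apply, pl13_mul_apply, pl23_mul_apply]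
  generalize (1 : Mat3 n) = M
  have hx {a b : Fin n} (h : a ≠ b) : x lam a b ≠ 0 := by
    simpa using x_add_intCast_ne_zero hgen h 0
  have hx1 {a b : Fin n} (h : a ≠ b) : x lam a b + 1 ≠ 0 := by
    simpa using x_add_intCast_ne_zero hgen h 1
  have hx2 {a b : Fin n} (h : a ≠ b) : x lam a b - 1 ≠ 0 := by
    simpa [sub_eq_add_neg] using x_add_intCast_ne_zero hgen h (-1)
  by_cases hab : a = b
  · subst hab
    by_cases hac : a = c
    · subst hac
      simp [diagCoeff_self, swapCoeff_self]
    · have := hx hac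
      have := hx1 hac
      have := hx2 hac
      rcases lt_or_gt_of_ne hac with h | h
      all_goals
        simp only [diagCoeff, swapCoeff, x_sh, hac, Ne.symm hac, h, h.not_gt, x_swap lam a c,
          if_true, if_false]
        grind
  · by_cases hac : a = c
    · subst hac
      have := hx hab
      have := hx1 hab
      rcases lt_or_gt_of_ne hab with h | h
      all_goals
        simp only [diagCoeff, swapCoeff, x_sh, hab, Ne.symm hab, h, h.not_gt, x_swap lam a b,
          if_true, if_false, add_zero, sub_zero, ← neg_add', neg_sq]
        field_simp
        ring
    · by_cases hbc : b = c
      · subst hbc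
        have := hx hab
        have := hx1 hab
        have := hx2 hab
        rcases lt_or_gt_of_ne hab with h | h
        all_goals
          simp only [diagCoeff, swapCoeff, x_sh, hab, Ne.symm hab, h, h.not_gt, x_swap lam a b,
            if_true, if_false]
          grind
      · simp only [diagCoeff_sh_of_ne, swapCoeff_sh_of_ne, hab, hac, hbc, Ne.symm hab, Ne.symm hac,
          Ne.symm hbc, ne_eq, not_false_eq_true, swapCoeff_swap lam a b, swapCoeff_swap lam b c]
        linear_combination
          (diagCoeff lam a b * M (c, a, b) q - diagCoeff lam b c * M (b, c, a) q +
              (swapCoeff lam a b - swapCoeff lam b c) * M (c, b, a) q) *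
              swapCoeff_mul_swapCoeff hab hbc hac (hx hab) (hx hbc) (hx hac) +
            swapCoeff lam a c * M (c, b, a) q *
              (diagCoeff_mul_swap hab (hx hab) - diagCoeff_mul_swap hbc (hx hbc))

end Stmt14
end
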